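/- Let M ≥ 1 be an integer and L = 20M. Let r₁, r₂, q be points whose coordinates are integers in {1, …, M}, with r₁ ≠ r₂, r₂ ≠ q, and q not on line(r₁,r₂). Let α be a real number with 0 < α ≤ L⁻⁷, and let x, g be points of ℝ² with ‖x − g‖ ≤ α and ‖x − q‖ > 1/L. Suppose the segment segment(x,g) intersects the line line(r₂,q), and suppose p is a point lying on line(g,q) and on segment(r₁,r₂). Then ‖p − r₂‖ ≤ L⁻². -/

import Mathlib

/-!
Put the origin at `q` and write `w = r₂ - q`, `d = r₁ - r₂`, `h = g - q`. Then `p - q = s • h` for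
some real `s`, and `p = r₂ + t • d` with `0 ≤ t ≤ 1`. Taking the planar cross product of
`w + t • d = s • h` with `w` gives `t * (d × w) = s * (h × w)`.

* `d × w` is a nonzero integer because `q` is off `line r₁ r₂`, so `|d × w| ≥ 1`
  (`one_le_abs_cross`) and `t ≤ |s| * |h × w|`.
* The segment from `x` to `g` meets the line through `q` in direction `w` at some `y`, so
  `|h × w| = |(g - y) × w| ≤ α ‖w‖`.
* `‖h‖ ≥ 1 / L - α ≥ 1 / (2 L)` and `|s| ‖h‖ = ‖p - q‖ ≤ ‖w‖ + ‖d‖ ≤ L / 5`, so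
  `|s| ≤ 2 L² / 5`.

With `‖w‖, ‖d‖ ≤ L / 10` and `α ≤ L⁻⁷` this gives `‖p - r₂‖ = t ‖d‖ ≤ L⁻³ ≤ L⁻²`.
-/

/-- A point of the Euclidean plane both of whose coordinates are integers in `{1, …, M}`. -/
def MBoundedPoint (M : ℕ) (p : EuclideanSpace ℝ (Fin 2)) : Prop :=
  ∃ a b : ℤ, 1 ≤ a ∧ a ≤ (M : ℤ) ∧ 1 ≤ b ∧ b ≤ (M : ℤ) ∧ p 0 = a ∧ p 1 = b

/-- The line through two points `u` and `v` of the Euclidean plane. -/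
def line (u v : EuclideanSpace ℝ (Fin 2)) : Set (EuclideanSpace ℝ (Fin 2)) :=
  {p | ∃ t : ℝ, p = u + t • (v - u)}

/-- The planar cross product (the determinant of the matrix with columns `u`, `v`). -/
def cross (u v : EuclideanSpace ℝ (Fin 2)) : ℝ := u 0 * v 1 - u 1 * v 0

lemma abs_cross_le (u v : EuclideanSpace ℝ (Fin 2)) : |cross u v| ≤ ‖u‖ * ‖v‖ := by
  apply abs_le_of_sq_le_sq _ (by positivity)
  rw [mul_pow, EuclideanSpace.norm_sq_eq, EuclideanSpace.norm_sq_eq]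
  simp only [Fin.sum_univ_two, Real.norm_eq_abs, sq_abs, cross]
  nlinarith [sq_nonneg (u 0 * v 0 + u 1 * v 1)]

lemma norm_sub_le_of_bounded {M : ℕ} {u v : EuclideanSpace ℝ (Fin 2)}
    (hu : MBoundedPoint M u) (hv : MBoundedPoint M v) : ‖u - v‖ ≤ 2 * M := by
  obtain ⟨a, b, ha1, ha2, hb1, hb2, hua, hub⟩ := hu
  obtain ⟨c, e, hc1, hc2, he1, he2, hvc, hve⟩ := hv
  have ha1' : (1 : ℝ) ≤ a := by exact_mod_cast ha1
  have ha2' : (a : ℝ) ≤ M := by exact_mod_cast ha2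
  have hb1' : (1 : ℝ) ≤ b := by exact_mod_cast hb1
  have hb2' : (b : ℝ) ≤ M := by exact_mod_cast hb2
  have hc1' : (1 : ℝ) ≤ c := by exact_mod_cast hc1
  have hc2' : (c : ℝ) ≤ M := by exact_mod_cast hc2
  have he1' : (1 : ℝ) ≤ e := by exact_mod_cast he1
  have he2' : (e : ℝ) ≤ M := by exact_mod_cast he2
  apply le_of_sq_le_sq _ (by positivity)
  rw [EuclideanSpace.norm_sq_eq]
  simp only [Fin.sum_univ_two, Real.norm_eq_abs, sq_abs, PiLp.sub_apply, hua, hub, hvc, hve]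
  have h1 : ((a : ℝ) - c) ^ 2 ≤ (M : ℝ) ^ 2 := sq_le_sq' (by linarith) (by linarith)
  have h2 : ((b : ℝ) - e) ^ 2 ≤ (M : ℝ) ^ 2 := sq_le_sq' (by linarith) (by linarith)
  nlinarith [sq_nonneg (M : ℝ)]

lemma cross_ne_zero {r₁ r₂ q : EuclideanSpace ℝ (Fin 2)}
    (hrne : r₁ ≠ r₂) (hql : q ∉ line r₁ r₂) : cross (r₁ - r₂) (r₂ - q) ≠ 0 := by
  intro h0
  simp only [cross, PiLp.sub_apply] at h0
  apply hql
  by_cases h : r₂ 0 - r₁ 0 = 0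
  · have h' : r₂ 1 - r₁ 1 ≠ 0 := by
      intro h'
      apply hrne
      ext i
      fin_cases i <;> simp <;> linarith
    refine ⟨(q 1 - r₁ 1) / (r₂ 1 - r₁ 1), ?_⟩
    ext i
    fin_cases i <;> simp <;> field_simp <;> linarith
  · refine ⟨(q 0 - r₁ 0) / (r₂ 0 - r₁ 0), ?_⟩
    ext i
    fin_cases i <;> simp <;> field_simp <;> linarith

/-- Twice the area of a nondegenerate triangle with integer vertices is a positive integer. -/
lemma one_le_abs_cross {M : ℕ} {r₁ r₂ q : EuclideanSpace ℝ (Fin 2)}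
    (hr₁ : MBoundedPoint M r₁) (hr₂ : MBoundedPoint M r₂) (hq : MBoundedPoint M q)
    (hrne : r₁ ≠ r₂) (hql : q ∉ line r₁ r₂) : 1 ≤ |cross (r₁ - r₂) (r₂ - q)| := by
  have h0 := cross_ne_zero hrne hql
  obtain ⟨a, b, -, -, -, -, ha, hb⟩ := hr₁
  obtain ⟨c, d, -, -, -, -, hc, hd⟩ := hr₂
  obtain ⟨e, f, -, -, -, -, he, hf⟩ := hq
  have hz : cross (r₁ - r₂) (r₂ - q) = (((a - c) * (d - f) - (b - d) * (c - e) : ℤ) : ℝ) := by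
    simp [cross, ha, hb, hc, hd, he, hf]
  rw [hz] at h0 ⊢
  exact_mod_cast Int.one_le_abs (by exact_mod_cast h0)

/-- Limited blocking: let `M ≥ 1`, `L = 20M`, let `r₁, r₂, q` be `M`-bounded points with
`r₁ ≠ r₂`, `r₂ ≠ q` and `q` not on `line(r₁,r₂)`, let `0 < α ≤ L⁻⁷`, and let `x, g` be
points with `‖x − g‖ ≤ α` and `‖x − q‖ > 1/L`. If the segment from `x` to `g` meets
`line(r₂,q)` and `p` lies on `line(g,q)` and on `segment(r₁,r₂)`, then
`‖p − r₂‖ ≤ L⁻²`. -/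
theorem limited_blocking
    (M : ℕ) (hM : 1 ≤ M) (L : ℝ) (hL : L = 20 * M)
    (r₁ r₂ q : EuclideanSpace ℝ (Fin 2))
    (hr₁ : MBoundedPoint M r₁) (hr₂ : MBoundedPoint M r₂) (hq : MBoundedPoint M q)
    (hrne : r₁ ≠ r₂) (hqne : r₂ ≠ q) (hql : q ∉ line r₁ r₂)
    (α : ℝ) (hα0 : 0 < α) (hα : α ≤ (L ^ 7)⁻¹)
    (x g : EuclideanSpace ℝ (Fin 2))
    (hxg : ‖x - g‖ ≤ α) (hxq : 1 / L < ‖x - q‖)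
    (hblock : (segment ℝ x g ∩ line r₂ q).Nonempty)
    (p : EuclideanSpace ℝ (Fin 2))
    (hp₁ : p ∈ line g q) (hp₂ : p ∈ segment ℝ r₁ r₂) :
    ‖p - r₂‖ ≤ (L ^ 2)⁻¹ := by
  have hM' : (1 : ℝ) ≤ M := by exact_mod_cast hM
  have hL20 : 20 ≤ L := by linarith
  have hL0 : 0 < L := by linarith
  have hw : ‖r₂ - q‖ ≤ L / 10 := by linarith [norm_sub_le_of_bounded hr₂ hq]
  have hd : ‖r₁ - r₂‖ ≤ L / 10 := by linarith [norm_sub_le_of_bounded hr₁ hr₂]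
  have hk := one_le_abs_cross hr₁ hr₂ hq hrne hql
  obtain ⟨u, hu⟩ := hp₁
  obtain ⟨a, t, ha, ht, hat, hp⟩ := (segment_symm ℝ r₁ r₂ ▸ hp₂ : p ∈ segment ℝ r₂ r₁)
  obtain rfl : a = 1 - t := by linarith
  obtain ⟨y, hy, c, hc⟩ := hblock
  have hpr : p - r₂ = t • (r₁ - r₂) := by rw [← hp]; module
  have hpq : p - q = (1 - u) • (g - q) := by rw [hu]; module
  -- `y - q` is parallel to `r₂ - q`, so `y` may replace `q` in the cross product.
  have hgy : cross (g - q) (r₂ - q) = cross (g - y) (r₂ - q) := by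
    rw [hc]; simp [cross]; ring
  have hgyα : ‖g - y‖ ≤ α := by
    rw [norm_sub_rev] at hxg
    refine le_trans ?_ hxg
    obtain ⟨b, e, hb, he, hbe, rfl⟩ := hy
    obtain rfl : e = 1 - b := by linarith
    have : g - (b • x + (1 - b) • g) = b • (g - x) := by module
    rw [this, norm_smul, Real.norm_of_nonneg hb]
    exact mul_le_of_le_one_left (norm_nonneg _) (by linarith)
  have hcr : |cross (g - q) (r₂ - q)| ≤ α * (L / 10) := by
    rw [hgy]
    exact (abs_cross_le _ _).trans (by gcongr)
  have key : t * cross (r₁ - r₂) (r₂ - q) = (1 - u) * cross (g - q) (r₂ - q) := by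
    have e : t • (r₁ - r₂) + (r₂ - q) = (1 - u) • (g - q) := by rw [← hpr, ← hpq]; abel
    have e0 := congrArg (fun v : EuclideanSpace ℝ (Fin 2) => v 0) e
    have e1 := congrArg (fun v : EuclideanSpace ℝ (Fin 2) => v 1) e
    simp only [PiLp.add_apply, PiLp.smul_apply, PiLp.sub_apply, smul_eq_mul] at e0 e1
    simp only [cross, PiLp.sub_apply]
    linear_combination (r₂ 1 - q 1) * e0 - (r₂ 0 - q 0) * e1
  have ht1 : t ≤ |1 - u| * (α * (L / 10)) := by
    calc t ≤ t * |cross (r₁ - r₂) (r₂ - q)| := le_mul_of_one_le_right ht hk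
      _ = |1 - u| * |cross (g - q) (r₂ - q)| := by
        rw [← abs_mul, ← key, abs_mul, abs_of_nonneg ht]
      _ ≤ _ := by gcongr
  have hα2 : α ≤ 1 / (2 * L) := by
    refine hα.trans ?_
    rw [← one_div]
    apply one_div_le_one_div_of_le (by positivity)
    have : (1 : ℝ) ≤ L ^ 5 := one_le_pow₀ (by linarith)
    calc 2 * L ≤ L ^ 2 * 1 := by nlinarith
      _ ≤ L ^ 2 * L ^ 5 := by gcongr
      _ = L ^ 7 := by ring
  have hh : 1 / (2 * L) ≤ ‖g - q‖ := by
    have h1 := norm_sub_le_norm_sub_add_norm_sub x g q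
    have h2 : 1 / L = 1 / (2 * L) + 1 / (2 * L) := by field_simp; norm_num
    linarith
  have hpqn : ‖p - q‖ ≤ L / 5 := by
    have h1 := norm_sub_le_norm_sub_add_norm_sub p r₂ q
    have h2 : ‖p - r₂‖ ≤ ‖r₁ - r₂‖ := by
      rw [hpr, norm_smul, Real.norm_of_nonneg ht]
      exact mul_le_of_le_one_left (norm_nonneg _) (by linarith)
    linarith
  have hs : |1 - u| ≤ 2 * L ^ 2 / 5 := by
    rw [hpq, norm_smul, Real.norm_eq_abs] at hpqn
    have h1 : |1 - u| * (1 / (2 * L)) ≤ L / 5 := le_trans (by gcongr) hpqn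
    rw [mul_one_div, div_le_iff₀ (by positivity)] at h1
    linarith
  rw [hpr, norm_smul, Real.norm_of_nonneg ht]
  calc t * ‖r₁ - r₂‖ ≤ (2 * L ^ 2 / 5 * ((L ^ 7)⁻¹ * (L / 10))) * (L / 10) := by
        gcongr
        exact ht1.trans (by gcongr)
    _ = (L ^ 2)⁻¹ * (1 / (250 * L)) := by field_simp; norm_num
    _ ≤ (L ^ 2)⁻¹ * 1 := by
        gcongr
        rw [div_le_one (by positivity)]
        linarith
    _ = (L ^ 2)⁻¹ := mul_one _
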